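/- arXiv:1710.09773 — 2 statements merged into one kernel-verified Lean document; each statement's English description precedes it below -/
import Mathlib

section
/- Let a < b be real numbers, n ∈ ℕ, and c : Fin (n+1) → ℝ with c 0 ≠ 0. Let x : ℝ → ℝ be integrable on (a,b). If for almost every t ∈ (a,b) one has Σ_{j=0}^{n} c_j · (I_a^[n−j] x)(t) = 0, then x = 0 almost everywhere on (a,b). -/
/-!
Let `m` be the least power of the integral operator `I` that occurs in the equation with a nonzero
coefficient. Then `y = I^m x` solves a Volterra equation of the second kind,
`y = ∑ k, d k • I^(k+1) y`. Since `‖I^(k+1) y (t)‖ ≤ (t - a)^k ∫_a^t ‖y‖`, this gives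
`‖y‖ ≤ K ∫_a^t ‖y‖` almost everywhere, and Grönwall's inequality forces `y = 0`. By Lebesgue's
differentiation theorem `I` is injective up to null sets, so `x = 0`.
-/

open MeasureTheory

/-- The indefinite-integral operator `(I_a g)(t) = ∫_a^t g(s) ds`. -/
noncomputable def indefInt (a : ℝ) (g : ℝ → ℝ) : ℝ → ℝ := fun t => ∫ s in a..t, g s

open Set

/-- The operator `I_a` of `indefInt` for functions with values in a real normed space `E`; for
`E = ℝ` the two agree definitionally. -/
noncomputable def primitiveFrom {E : Type*} [NormedAddCommGroup E] [NormedSpace ℝ E]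
    (a : ℝ) (f : ℝ → E) : ℝ → E := fun t ↦ ∫ s in a..t, f s

section Primitive

variable {E : Type*} [NormedAddCommGroup E] [NormedSpace ℝ E] {a b t : ℝ} {f : ℝ → E}

lemma continuousOn_primitiveFrom (hf : IntervalIntegrable f volume a b) :
    ContinuousOn (primitiveFrom a f) (uIcc a b) :=
  intervalIntegral.continuousOn_primitive_interval' hf left_mem_uIcc

lemma intervalIntegrable_primitiveFrom (hf : IntervalIntegrable f volume a b) :
    IntervalIntegrable (primitiveFrom a f) volume a b :=
  (continuousOn_primitiveFrom hf).intervalIntegrable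

lemma ae_eq_zero_of_primitiveFrom_ae_eq_zero [CompleteSpace E]
    (hf : IntervalIntegrable f volume a b)
    (h : primitiveFrom a f =ᵐ[volume.restrict (Ioo a b)] 0) :
    f =ᵐ[volume.restrict (Ioo a b)] 0 := by
  have hsub : Ioo a b ⊆ uIcc a b := Ioo_subset_Icc_self.trans Icc_subset_uIcc
  have hzero : EqOn (primitiveFrom a f) 0 (Ioo a b) :=
    Measure.eqOn_open_of_ae_eq h isOpen_Ioo ((continuousOn_primitiveFrom hf).mono hsub)
      continuousOn_const
  rw [Filter.EventuallyEq, ae_restrict_iff' measurableSet_Ioo]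
  filter_upwards [hf.ae_hasDerivAt_integral] with t hderiv ht
  have hderiv_zero : HasDerivAt (primitiveFrom a f) 0 t :=
    (hasDerivAt_const t (0 : E)).congr_of_eventuallyEq
      (hzero.eventuallyEq_of_mem (isOpen_Ioo.mem_nhds ht))
  exact (hderiv (hsub ht) a left_mem_uIcc).unique hderiv_zero

lemma primitiveFrom_nonneg {g : ℝ → ℝ} (hat : a ≤ t) (hg : ∀ s ∈ Icc a t, 0 ≤ g s) :
    0 ≤ primitiveFrom a g t :=
  intervalIntegral.integral_nonneg hat hg

lemma monotoneOn_primitiveFrom_of_nonneg {g : ℝ → ℝ} (hg : IntervalIntegrable g volume a b)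
    (hnonneg : 0 ≤ᵐ[volume.restrict (Ioc a b)] g) :
    MonotoneOn (primitiveFrom a g) (Icc a b) := fun _ hs _ ht hst ↦
  intervalIntegral.integral_mono_interval le_rfl hs.1 hst
    (ae_restrict_of_ae_restrict_of_subset (Ioc_subset_Ioc_right ht.2) hnonneg)
    (hg.mono_set (uIcc_subset_uIcc_left (Icc_subset_uIcc ht)))

lemma norm_iterate_succ_primitiveFrom_le (hf : IntervalIntegrable f volume a b) (k : ℕ)
    (ht : t ∈ Icc a b) :
    ‖(primitiveFrom a)^[k + 1] f t‖ ≤ (t - a) ^ k * primitiveFrom a (‖f ·‖) t := by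
  induction k generalizing t with
  | zero => simpa [primitiveFrom] using intervalIntegral.norm_integral_le_integral_norm ht.1
  | succ k ih =>
    have hmono : MonotoneOn (primitiveFrom a (‖f ·‖)) (Icc a b) :=
      monotoneOn_primitiveFrom_of_nonneg hf.norm (.of_forall fun _ ↦ norm_nonneg _)
    have hbound : ∀ s ∈ uIoc a t,
        ‖(primitiveFrom a)^[k + 1] f s‖ ≤ (t - a) ^ k * primitiveFrom a (‖f ·‖) t := by
      intro s hs
      rw [uIoc_of_le ht.1] at hs
      have hsab : s ∈ Icc a b := ⟨hs.1.le, hs.2.trans ht.2⟩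
      have hsa : 0 ≤ s - a := sub_nonneg.mpr hs.1.le
      have hta : 0 ≤ t - a := sub_nonneg.mpr ht.1
      have hs_nonneg : 0 ≤ primitiveFrom a (‖f ·‖) s :=
        primitiveFrom_nonneg hs.1.le fun _ _ ↦ norm_nonneg _
      refine (ih hsab).trans ?_
      gcongr
      exacts [hs.2, hmono hsab ht hs.2]
    rw [Function.iterate_succ_apply']
    calc ‖primitiveFrom a ((primitiveFrom a)^[k + 1] f) t‖
        ≤ (t - a) ^ k * primitiveFrom a (‖f ·‖) t * |t - a| :=
          intervalIntegral.norm_integral_le_of_norm_le_const hbound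
      _ = (t - a) ^ (k + 1) * primitiveFrom a (‖f ·‖) t := by
          rw [abs_of_nonneg (sub_nonneg.mpr ht.1)]
          ring

end Primitive

section Gronwall

variable {E : Type*} [NormedAddCommGroup E] [NormedSpace ℝ E] {a b K : ℝ} {f : ℝ → E}

lemma hasDerivWithinAt_Ici_primitiveFrom [CompleteSpace E] {t : ℝ}
    (hf : ContinuousOn f (Icc a b)) (ht : t ∈ Ico a b) :
    HasDerivWithinAt (primitiveFrom a f) (f t) (Ici t) t := by
  have hmem : Icc a b ∈ nhdsWithin t (Ioi t) := Icc_mem_nhdsGT_of_mem ht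
  have hint : IntervalIntegrable f volume a t :=
    (hf.mono (Icc_subset_Icc_right ht.2.le)).intervalIntegrable_of_Icc ht.1
  exact intervalIntegral.integral_hasDerivWithinAt_right hint (t := Ioi t)
    ⟨Icc a b, hmem, hf.aestronglyMeasurable measurableSet_Icc⟩
    ((hf t (Ico_subset_Icc_self ht)).mono_of_mem_nhdsWithin hmem)

lemma eqOn_zero_of_norm_le_norm_primitiveFrom [CompleteSpace E] (hf : ContinuousOn f (Icc a b))
    (h : ∀ t ∈ Icc a b, ‖f t‖ ≤ K * ‖primitiveFrom a f t‖) : EqOn f 0 (Icc a b) := by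
  intro t ht
  have hab : a ≤ b := ht.1.trans ht.2
  have hcont : ContinuousOn (primitiveFrom a f) (Icc a b) := by
    simpa only [uIcc_of_le hab] using
      continuousOn_primitiveFrom (hf.intervalIntegrable_of_Icc hab)
  have hprim : primitiveFrom a f t = 0 :=
    eq_zero_of_abs_deriv_le_mul_abs_self_of_eq_zero_right hcont
      (fun _ ↦ hasDerivWithinAt_Ici_primitiveFrom hf) intervalIntegral.integral_same
      (fun s hs ↦ h s (Ico_subset_Icc_self hs)) t ht
  simpa [hprim] using h t ht

-- `‖f‖` need not be continuous, so Grönwall's inequality is applied to its primitive instead.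
lemma ae_eq_zero_of_norm_le_primitiveFrom_norm {F : Type*} [NormedAddCommGroup F] {f : ℝ → F}
    (hf : IntervalIntegrable f volume a b)
    (h : ∀ᵐ t ∂volume.restrict (Ioo a b), ‖f t‖ ≤ K * primitiveFrom a (‖f ·‖) t) :
    f =ᵐ[volume.restrict (Ioo a b)] 0 := by
  set Y := primitiveFrom a (‖f ·‖)
  have hY_nonneg {t : ℝ} (ht : a ≤ t) : 0 ≤ Y t :=
    primitiveFrom_nonneg ht fun _ _ ↦ norm_nonneg _
  have hY_cont : ContinuousOn Y (Icc a b) :=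
    (continuousOn_primitiveFrom hf.norm).mono Icc_subset_uIcc
  have hY_le : ∀ t ∈ Icc a b, Y t ≤ K * primitiveFrom a Y t := by
    intro t ht
    have hsub : uIcc a t ⊆ uIcc a b := uIcc_subset_uIcc_left (Icc_subset_uIcc ht)
    have hle : (‖f ·‖) ≤ᵐ[volume.restrict (Icc a t)] fun s ↦ K * Y s := by
      rw [← restrict_Ioo_eq_restrict_Icc]
      exact ae_restrict_of_ae_restrict_of_subset (Ioo_subset_Ioo_right ht.2) h
    calc Y t ≤ ∫ s in a..t, K * Y s :=
          intervalIntegral.integral_mono_ae_restrict ht.1 (hf.norm.mono_set hsub)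
            (((intervalIntegrable_primitiveFrom hf.norm).mono_set hsub).const_mul K) hle
      _ = K * primitiveFrom a Y t := intervalIntegral.integral_const_mul K Y
  have hY_zero : EqOn Y 0 (Icc a b) := by
    refine eqOn_zero_of_norm_le_norm_primitiveFrom (K := K) hY_cont fun t ht ↦ ?_
    have hprim : 0 ≤ primitiveFrom a Y t :=
      primitiveFrom_nonneg ht.1 fun _ hs ↦ hY_nonneg hs.1
    rw [Real.norm_of_nonneg (hY_nonneg ht.1), Real.norm_of_nonneg hprim]
    exact hY_le t ht
  filter_upwards [h, ae_restrict_mem measurableSet_Ioo] with t hle ht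
  simpa [hY_zero (Ioo_subset_Icc_self ht)] using hle

lemma ae_eq_zero_of_norm_le_sum_norm_iterate_primitiveFrom {ι : Type*} (s : Finset ι) {C : ι → ℝ}
    (hC : ∀ i ∈ s, 0 ≤ C i) (m : ι → ℕ) (hf : IntervalIntegrable f volume a b)
    (h : ∀ᵐ t ∂volume.restrict (Ioo a b),
      ‖f t‖ ≤ ∑ i ∈ s, C i * ‖(primitiveFrom a)^[m i + 1] f t‖) :
    f =ᵐ[volume.restrict (Ioo a b)] 0 := by
  refine ae_eq_zero_of_norm_le_primitiveFrom_norm (K := ∑ i ∈ s, C i * (b - a) ^ m i) hf ?_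
  filter_upwards [h, ae_restrict_mem measurableSet_Ioo] with t hle ht
  have hta : 0 ≤ t - a := sub_nonneg.mpr ht.1.le
  have hY : 0 ≤ primitiveFrom a (‖f ·‖) t :=
    primitiveFrom_nonneg ht.1.le fun _ _ ↦ norm_nonneg _
  calc ‖f t‖ ≤ ∑ i ∈ s, C i * ‖(primitiveFrom a)^[m i + 1] f t‖ := hle
    _ ≤ ∑ i ∈ s, C i * ((b - a) ^ m i * primitiveFrom a (‖f ·‖) t) := by
        gcongr with i hi
        · exact hC i hi
        · refine (norm_iterate_succ_primitiveFrom_le hf (m i) (Ioo_subset_Icc_self ht)).trans ?_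
          gcongr
          exact ht.2.le
    _ = (∑ i ∈ s, C i * (b - a) ^ m i) * primitiveFrom a (‖f ·‖) t := by
        simp only [Finset.sum_mul, mul_assoc]

end Gronwall

lemma sum_smul_iterate_castSucc {R M α : Type*} [AddCommMonoid M] [SMul R M]
    (T : (α → M) → α → M) {n : ℕ} (c : Fin (n + 1) → R) (x : α → M) (t : α) :
    ∑ j, c j • T^[n - (j : ℕ)] x t =
      (∑ j : Fin n, c j.castSucc • T^[n - 1 - (j : ℕ) + 1] x t) + c (Fin.last n) • x t := by
  have hexp (j : Fin n) : n - (j : ℕ) = n - 1 - (j : ℕ) + 1 := by omega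
  simp only [Fin.sum_univ_castSucc, Fin.val_castSucc, hexp, Fin.val_last, Nat.sub_self,
    Function.iterate_zero, id]

section IntegralEquation

variable {𝕜 E : Type*} [NormedField 𝕜] [NormedAddCommGroup E] [NormedSpace ℝ E] [NormedSpace 𝕜 E]
  {a b : ℝ} {n : ℕ} {x : ℝ → E}

lemma ae_eq_zero_of_sum_iterate_primitiveFrom_of_last_ne_zero {c : Fin (n + 1) → 𝕜}
    (hc : c (Fin.last n) ≠ 0) (hx : IntervalIntegrable x volume a b)
    (heq : ∀ᵐ t ∂volume.restrict (Ioo a b),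
      ∑ j, c j • (primitiveFrom a)^[n - (j : ℕ)] x t = 0) :
    x =ᵐ[volume.restrict (Ioo a b)] 0 := by
  refine ae_eq_zero_of_norm_le_sum_norm_iterate_primitiveFrom Finset.univ
    (C := fun j : Fin n ↦ ‖(c (Fin.last n))⁻¹‖ * ‖c j.castSucc‖) (fun _ _ ↦ by positivity)
    (fun j ↦ n - 1 - j) hx ?_
  filter_upwards [heq] with t ht
  rw [sum_smul_iterate_castSucc, add_eq_zero_iff_neg_eq, eq_comm, ← eq_inv_smul_iff₀ hc] at ht
  calc ‖x t‖ = ‖(c (Fin.last n))⁻¹‖ *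
        ‖∑ j : Fin n, c j.castSucc • (primitiveFrom a)^[n - 1 - (j : ℕ) + 1] x t‖ := by
        rw [ht, norm_smul, norm_neg]
    _ ≤ ‖(c (Fin.last n))⁻¹‖ *
        ∑ j : Fin n, ‖c j.castSucc • (primitiveFrom a)^[n - 1 - (j : ℕ) + 1] x t‖ := by
        gcongr
        exact norm_sum_le _ _
    _ = ∑ j : Fin n, ‖(c (Fin.last n))⁻¹‖ * ‖c j.castSucc‖ *
        ‖(primitiveFrom a)^[n - 1 - (j : ℕ) + 1] x t‖ := by
        simp only [norm_smul, Finset.mul_sum, mul_assoc]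

theorem homogeneous_integral_equation_trivial_solution_general [CompleteSpace E]
    {c : Fin (n + 1) → 𝕜} (hc : c ≠ 0) (hx : IntervalIntegrable x volume a b)
    (heq : ∀ᵐ t ∂volume.restrict (Ioo a b),
      ∑ j, c j • (primitiveFrom a)^[n - (j : ℕ)] x t = 0) :
    x =ᵐ[volume.restrict (Ioo a b)] 0 := by
  induction n generalizing x with
  | zero =>
    have hlast : c (Fin.last 0) ≠ 0 := fun h ↦ hc (funext (Fin.forall_fin_one.mpr h))
    exact ae_eq_zero_of_sum_iterate_primitiveFrom_of_last_ne_zero hlast hx heq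
  | succ n ih =>
    by_cases hlast : c (Fin.last (n + 1)) = 0
    · have hinit : Fin.init c ≠ 0 := fun h ↦ hc (funext (Fin.lastCases hlast (congrFun h)))
      refine ae_eq_zero_of_primitiveFrom_ae_eq_zero hx
        (ih hinit (intervalIntegrable_primitiveFrom hx) ?_)
      filter_upwards [heq] with t ht
      rwa [sum_smul_iterate_castSucc, hlast, zero_smul, add_zero] at ht
    · exact ae_eq_zero_of_sum_iterate_primitiveFrom_of_last_ne_zero hlast hx heq

end IntegralEquation

/-- If `x` is integrable on `(a,b)`, `c 0 ≠ 0`, and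
`Σ_{j=0}^{n} c_j · (I_a^[n−j] x)(t) = 0` a.e. on `(a,b)`, then `x = 0` a.e. on `(a,b)`. -/
theorem homogeneous_integral_equation_trivial_solution
    (a b : ℝ) (hab : a < b) (n : ℕ) (c : Fin (n + 1) → ℝ) (hc : c 0 ≠ 0)
    (x : ℝ → ℝ) (hx : IntegrableOn x (Set.Ioo a b))
    (heq : ∀ᵐ t ∂(volume.restrict (Set.Ioo a b)),
      ∑ j : Fin (n + 1), c j * (indefInt a)^[n - (j : ℕ)] x t = 0) :
    ∀ᵐ t ∂(volume.restrict (Set.Ioo a b)), x t = 0 :=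
  homogeneous_integral_equation_trivial_solution_general (fun h ↦ hc (congrFun h 0))
    ((intervalIntegrable_iff_integrableOn_Ioo_of_le hab.le).mpr hx) heq
end

section
/- Let a < b be real numbers, q a positive natural number, l ≥ 1, let a_i : Fin l → ℕ be pairwise distinct natural numbers and c : Fin l → ℂ coefficients such that the coefficient c_{i₀} attached to the largest exponent a_{i₀} is nonzero. Then there exist m ∈ ℕ, coefficients d : Fin m → ℂ, natural numbers b_k : Fin m → ℕ, a natural number n, and coefficients e : Fin (n+1) → ℂ with e_n ≠ 0, such that for every x : ℝ → ℂ integrable on (a,b) and almost every t ∈ (a,b): Σ_{k} d_k · ( I_{a+}^{b_k/q} ( s ↦ Σ_{i} c_i · (I_{a+}^{a_i/q} x)(s) ) )(t) = Σ_{j=0}^{n} e_j · (I_{a+}^{j} x)(t). In words: every linear fractional integral operator with constant coefficients and rational orders can be composed with another such operator so that the composition is a linear integral operator with constant coefficients and natural-number orders, whose top-order coefficient is nonzero. -/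
/-!
Write the given operator as `P(I^(1/q))` with the polynomial `P = ∑ c_i X^(a_i)`. Since `X` is
integral over `ℂ[X^q]`, so is `P`, and a nonzero element of an integral extension of domains has a
nonzero multiple in the base: `P * Q = R(X^q)` with `R ≠ 0`. Composing with `Q(I^(1/q))` therefore
gives `R(I^1)`.

Turning products of polynomials into compositions of operators rests on the semigroup law
`I^α I^β = I^(α+β)` and on additivity, both almost everywhere on `(a, b)`. Multiplication by
`exp (-t)` turns `I^α` into convolution with the density of the Gamma distribution of shape `α`,
which is integrable on the whole line. Euler's Beta integral says that these densities form a
convolution semigroup, and the semigroup law follows by associativity of convolution.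
-/

open MeasureTheory

/-- The left Riemann–Liouville fractional integral of order `α ≥ 0` from `a`:
`(I_{a+}^α x)(t) = (1/Γ(α)) ∫_a^t (t−s)^(α−1) x(s) ds` for `α > 0`, and the identity for
`α = 0`. -/
noncomputable def rlInt (a : ℝ) (α : ℝ) (x : ℝ → ℂ) : ℝ → ℂ :=
  if α = 0 then x
  else fun t => (Real.Gamma α)⁻¹ • ∫ s in a..t, ((t - s) ^ (α - 1) : ℝ) • x s

open ContinuousLinearMap Set Polynomial
open scoped Convolution

section GammaKernel

/-- The density of the Gamma distribution of shape `α` and rate `1`, that is, the kernel of the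
fractional integral of order `α` damped by `exp (-u)`. Unlike `ProbabilityTheory.gammaPDFReal` it
vanishes at `0`, so that the convolution semigroup law holds at every point. -/
noncomputable def gammaKernel (α : ℝ) : ℝ → ℝ :=
  (Ioi 0).indicator fun u => (Real.Gamma α)⁻¹ * (Real.exp (-u) * u ^ (α - 1))

variable {α β : ℝ}

lemma integrable_gammaKernel (hα : 0 < α) : Integrable (gammaKernel α) :=
  (integrable_indicator_iff measurableSet_Ioi).2
    ((Real.GammaIntegral_convergent hα).const_mul _)

lemma integral_rpow_mul_sub_rpow (hα : 0 < α) (hβ : 0 < β) {t : ℝ} (ht : 0 < t) :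
    ∫ s in 0..t, s ^ (α - 1) * (t - s) ^ (β - 1) =
      t ^ (α + β - 1) * (Real.Gamma α * Real.Gamma β / Real.Gamma (α + β)) := by
  have hcomplex := Complex.betaIntegral_scaled α β ht
  rw [Complex.betaIntegral_eq_Gamma_mul_div _ _ (by simpa) (by simpa)] at hcomplex
  apply Complex.ofReal_injective
  calc ((∫ s in 0..t, s ^ (α - 1) * (t - s) ^ (β - 1) : ℝ) : ℂ)
      = ∫ s in 0..t, (s : ℂ) ^ ((α : ℂ) - 1) * ((t : ℂ) - s) ^ ((β : ℂ) - 1) := by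
        rw [← intervalIntegral.integral_ofReal]
        refine intervalIntegral.integral_congr fun s hs => ?_
        rw [uIcc_of_le ht.le] at hs
        simp only [Complex.ofReal_mul, Complex.ofReal_cpow hs.1,
          Complex.ofReal_cpow (sub_nonneg.2 hs.2), Complex.ofReal_sub, Complex.ofReal_one]
    _ = _ := by
        rw [hcomplex]
        simp only [Complex.ofReal_mul, Complex.ofReal_cpow ht.le, Complex.ofReal_div,
          ← Complex.Gamma_ofReal, Complex.ofReal_sub, Complex.ofReal_add, Complex.ofReal_one]

lemma gammaKernel_convolution_gammaKernel (hα : 0 < α) (hβ : 0 < β) :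
    gammaKernel α ⋆[mul ℝ ℝ, volume] gammaKernel β = gammaKernel (α + β) := by
  simp only [gammaKernel]
  rw [← posConvolution_eq_convolution_indicator _ _ _ volume, posConvolution]
  refine indicator_congr fun t ht => ?_
  have hintegrand (s : ℝ) :
      mul ℝ ℝ ((Real.Gamma α)⁻¹ * (Real.exp (-s) * s ^ (α - 1)))
          ((Real.Gamma β)⁻¹ * (Real.exp (-(t - s)) * (t - s) ^ (β - 1))) =
        ((Real.Gamma α)⁻¹ * (Real.Gamma β)⁻¹ * Real.exp (-t)) *
          (s ^ (α - 1) * (t - s) ^ (β - 1)) := by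
    rw [mul_apply', show -t = -s + -(t - s) by ring, Real.exp_add]
    ring
  have hΓα := (Real.Gamma_pos_of_pos hα).ne'
  have hΓβ := (Real.Gamma_pos_of_pos hβ).ne'
  simp_rw [hintegrand]
  rw [intervalIntegral.integral_const_mul, integral_rpow_mul_sub_rpow hα hβ ht]
  field_simp

variable {E : Type*} [NormedAddCommGroup E] [NormedSpace ℝ E]

lemma gammaKernel_convolution_apply (α : ℝ) (g : ℝ → E) (t : ℝ) :
    (gammaKernel α ⋆[lsmul ℝ ℝ, volume] g) t =
      ∫ s in Iio t, ((Real.Gamma α)⁻¹ * (Real.exp (-(t - s)) * (t - s) ^ (α - 1))) • g s := by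
  rw [convolution_lsmul_swap, ← integral_indicator measurableSet_Iio]
  congr 1 with s
  by_cases hs : s < t <;> simp [gammaKernel, hs]

lemma gammaKernel_convolution_congr (α : ℝ) {g h : ℝ → E} {t : ℝ} (hgh : EqOn g h (Iio t)) :
    (gammaKernel α ⋆[lsmul ℝ ℝ, volume] g) t =
      (gammaKernel α ⋆[lsmul ℝ ℝ, volume] h) t := by
  simp_rw [gammaKernel_convolution_apply]
  exact setIntegral_congr_fun measurableSet_Iio fun s hs => by simp only [hgh hs]

lemma gammaKernel_convolution_gammaKernel_convolution [CompleteSpace E] (hα : 0 < α)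
    (hβ : 0 < β) {g : ℝ → E} (hg : Integrable g) :
    gammaKernel α ⋆[lsmul ℝ ℝ, volume] (gammaKernel β ⋆[lsmul ℝ ℝ, volume] g) =ᵐ[volume]
      gammaKernel (α + β) ⋆[lsmul ℝ ℝ, volume] g := by
  have hkα := integrable_gammaKernel hα
  have hkβ := integrable_gammaKernel hβ
  have hexists := hkα.norm.ae_convolution_exists (mul ℝ ℝ)
    (hkβ.norm.integrable_convolution (mul ℝ ℝ) hg.norm)
  filter_upwards [hexists] with t ht
  rw [← gammaKernel_convolution_gammaKernel hα hβ]
  exact (convolution_assoc (mul ℝ ℝ) (lsmul ℝ ℝ) (lsmul ℝ ℝ) (lsmul ℝ ℝ)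
    (fun u v z => by simp [mul_smul, smul_comm v u]) hkα.1 hkβ.1 hg.1
    (hkα.ae_convolution_exists _ hkβ) (hkβ.norm.ae_convolution_exists _ hg.norm) ht).symm

end GammaKernel

section ExpCutoff

variable {E : Type*} [NormedAddCommGroup E] [NormedSpace ℝ E] {a b : ℝ} {f g : ℝ → E}

/-- The function `s ↦ exp (-s) f(s)` cut off to `(a, b)`, the input on which fractional integrals
starting at `a` act as convolutions with `gammaKernel`. -/
noncomputable def expCutoff (a b : ℝ) (f : ℝ → E) : ℝ → E :=
  (Ioo a b).indicator fun s => Real.exp (-s) • f s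

lemma expCutoff_add (a b : ℝ) (f g : ℝ → E) :
    expCutoff a b (f + g) = expCutoff a b f + expCutoff a b g := by
  simp only [expCutoff, Pi.add_apply, smul_add]
  exact indicator_add _ _ _

lemma integrable_expCutoff_iff : Integrable (expCutoff a b f) ↔ IntegrableOn f (Ioo a b) := by
  have smul_of_continuous {φ : ℝ → ℝ} (hφ : Continuous φ) {h : ℝ → E}
      (hh : IntegrableOn h (Ioo a b)) : IntegrableOn (fun s => φ s • h s) (Ioo a b) :=
    hh.continuousOn_smul_of_subset hφ.continuousOn isCompact_Icc measurableSet_Ioo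
      Ioo_subset_Icc_self
  rw [expCutoff, integrable_indicator_iff measurableSet_Ioo]
  refine ⟨fun h => ?_, smul_of_continuous (by fun_prop)⟩
  simpa [smul_smul, ← Real.exp_add] using smul_of_continuous Real.continuous_exp h

lemma ae_eq_of_expCutoff_ae_eq (h : expCutoff a b f =ᵐ[volume] expCutoff a b g) :
    f =ᵐ[volume.restrict (Ioo a b)] g := by
  filter_upwards [ae_restrict_of_ae h, ae_restrict_mem measurableSet_Ioo] with t ht hmem
  simpa [expCutoff, hmem] using ht

lemma gammaKernel_convolution_expCutoff (α : ℝ) (f : ℝ → E) {t : ℝ} (ht : t ≤ b) :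
    (gammaKernel α ⋆[lsmul ℝ ℝ, volume] expCutoff a b f) t =
      Real.exp (-t) • (Real.Gamma α)⁻¹ • ∫ s in Ioo a t, (t - s) ^ (α - 1) • f s := by
  have hintegrand (s : ℝ) :
      ((Real.Gamma α)⁻¹ * (Real.exp (-(t - s)) * (t - s) ^ (α - 1))) • expCutoff a b f s =
        (Ioo a b).indicator
          (fun s => Real.exp (-t) • (Real.Gamma α)⁻¹ • (t - s) ^ (α - 1) • f s) s := by
    by_cases hs : s ∈ Ioo a b
    · rw [expCutoff, indicator_of_mem hs, indicator_of_mem hs,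
        show -t = -(t - s) + -s by ring, Real.exp_add]
      module
    · rw [expCutoff, indicator_of_notMem hs, indicator_of_notMem hs, smul_zero]
  have hIoo : Iio t ∩ Ioo a b = Ioo a t := by
    ext s
    grind
  simp_rw [gammaKernel_convolution_apply, hintegrand]
  rw [setIntegral_indicator measurableSet_Ioo, hIoo, integral_smul, integral_smul]

end ExpCutoff

section RlInt

variable {a b α β : ℝ} {f g : ℝ → ℂ}

@[simp]
lemma rlInt_zero (a : ℝ) (f : ℝ → ℂ) : rlInt a 0 f = f :=
  if_pos rfl

lemma rlInt_const_smul (a α : ℝ) (z : ℂ) (f : ℝ → ℂ) : rlInt a α (z • f) = z • rlInt a α f := by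
  by_cases hα : α = 0
  · simp [hα]
  ext t
  simp only [rlInt, if_neg hα, Pi.smul_apply, smul_comm _ z, intervalIntegral.integral_smul]

lemma expCutoff_rlInt (hα : 0 < α) (f : ℝ → ℂ) :
    expCutoff a b (rlInt a α f) =
      (Iio b).indicator (gammaKernel α ⋆[lsmul ℝ ℝ, volume] expCutoff a b f) := by
  ext t
  rcases le_or_gt b t with hbt | htb
  · simp [expCutoff, hbt.not_gt]
  rw [indicator_of_mem (mem_Iio.2 htb), gammaKernel_convolution_expCutoff α f htb.le]
  rcases le_or_gt t a with hta | hat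
  · simp [expCutoff, hta.not_gt]
  · rw [expCutoff, indicator_of_mem (mem_Ioo.2 ⟨hat, htb⟩), rlInt, if_neg hα.ne',
      intervalIntegral.integral_of_le hat.le, integral_Ioc_eq_integral_Ioo]

lemma integrableOn_rlInt (hα : 0 ≤ α) (hf : IntegrableOn f (Ioo a b)) :
    IntegrableOn (rlInt a α f) (Ioo a b) := by
  rcases hα.eq_or_lt with rfl | hα
  · simpa using hf
  rw [← integrable_expCutoff_iff] at hf
  rw [← integrable_expCutoff_iff, expCutoff_rlInt hα]
  exact ((integrable_gammaKernel hα).integrable_convolution _ hf).indicator measurableSet_Iio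

/-- Almost everywhere only, since the integrals defining the two summands need not converge at
every point. -/
lemma rlInt_add_ae_eq (hα : 0 ≤ α) (hf : IntegrableOn f (Ioo a b))
    (hg : IntegrableOn g (Ioo a b)) :
    rlInt a α (f + g) =ᵐ[volume.restrict (Ioo a b)] rlInt a α f + rlInt a α g := by
  rcases hα.eq_or_lt with rfl | hα
  · simp
  have hexists {h : ℝ → ℂ} (hh : IntegrableOn h (Ioo a b)) :
      ∀ᵐ t, ConvolutionExistsAt (gammaKernel α) (expCutoff a b h) t (lsmul ℝ ℝ) volume :=
    (integrable_gammaKernel hα).ae_convolution_exists _ (integrable_expCutoff_iff.2 hh)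
  apply ae_eq_of_expCutoff_ae_eq
  simp_rw [expCutoff_add, expCutoff_rlInt hα, ← indicator_add', expCutoff_add]
  filter_upwards [hexists hf, hexists hg] with t htf htg
  simp only [indicator_apply, Pi.add_apply, htf.distrib_add htg]

lemma rlInt_rlInt_ae_eq (hα : 0 ≤ α) (hβ : 0 ≤ β) (hf : IntegrableOn f (Ioo a b)) :
    rlInt a α (rlInt a β f) =ᵐ[volume.restrict (Ioo a b)] rlInt a (α + β) f := by
  rcases hα.eq_or_lt with rfl | hα
  · simp
  rcases hβ.eq_or_lt with rfl | hβ
  · simp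
  apply ae_eq_of_expCutoff_ae_eq
  rw [expCutoff_rlInt hα, expCutoff_rlInt hβ, expCutoff_rlInt (add_pos hα hβ)]
  filter_upwards [gammaKernel_convolution_gammaKernel_convolution hα hβ
    (integrable_expCutoff_iff.2 hf)] with t ht
  rcases le_or_gt b t with hbt | htb
  · simp [hbt.not_gt]
  rw [indicator_of_mem (mem_Iio.2 htb), indicator_of_mem (mem_Iio.2 htb), ← ht]
  exact gammaKernel_convolution_congr α fun s hs =>
    indicator_of_mem (mem_Iio.2 (lt_trans hs htb)) _

end RlInt

section RlPoly

/-- The operator `p(I)` obtained by substituting the fractional integral `I = I_{a+}^δ` into the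
polynomial `p`. Powers of `I` are encoded as fractional integrals of order `n * δ`, which agree
with the iterates of `I` only almost everywhere. -/
noncomputable def rlPoly (a δ : ℝ) : ℂ[X] →ₗ[ℂ] (ℝ → ℂ) → ℝ → ℂ :=
  lsum fun n => LinearMap.toSpanSingleton ℂ _ (rlInt a (n * δ))

variable {a b δ : ℝ} {x : ℝ → ℂ}

lemma rlPoly_monomial (a δ : ℝ) (n : ℕ) (z : ℂ) :
    rlPoly a δ (monomial n z) = z • rlInt a (n * δ) := by
  simp [rlPoly, lsum_apply, sum_monomial_index]

lemma rlPoly_apply_eq_sum_fin (a δ : ℝ) (p : ℂ[X]) (x : ℝ → ℂ) (t : ℝ) :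
    rlPoly a δ p x t =
      ∑ k : Fin (p.natDegree + 1), p.coeff k * rlInt a ((k : ℕ) * δ) x t := by
  conv_lhs => rw [p.as_sum_range, Finset.sum_range]
  simp [rlPoly_monomial]

lemma rlPoly_expand (a δ : ℝ) (q : ℕ) (p : ℂ[X]) :
    rlPoly a δ (expand ℂ q p) = rlPoly a (q * δ) p := by
  induction p using Polynomial.induction_on' with
  | add p₁ p₂ h₁ h₂ => simp only [map_add, h₁, h₂]
  | monomial n z => simp only [expand_monomial, rlPoly_monomial, Nat.cast_mul, mul_assoc]

lemma integrableOn_rlPoly (hδ : 0 ≤ δ) (p : ℂ[X]) (hx : IntegrableOn x (Ioo a b)) :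
    IntegrableOn (rlPoly a δ p x) (Ioo a b) := by
  induction p using Polynomial.induction_on' with
  | add p₁ p₂ h₁ h₂ =>
    rw [map_add]
    exact h₁.add h₂
  | monomial n z =>
    rw [rlPoly_monomial]
    exact (integrableOn_rlInt (by positivity) hx).smul z

lemma rlInt_rlPoly_ae_eq (hδ : 0 ≤ δ) (n : ℕ) (p : ℂ[X]) (hx : IntegrableOn x (Ioo a b)) :
    rlInt a (n * δ) (rlPoly a δ p x) =ᵐ[volume.restrict (Ioo a b)]
      rlPoly a δ (monomial n 1 * p) x := by
  have hn : 0 ≤ n * δ := by positivity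
  induction p using Polynomial.induction_on' with
  | add p₁ p₂ h₁ h₂ =>
    rw [mul_add, map_add, map_add]
    exact (rlInt_add_ae_eq hn (integrableOn_rlPoly hδ p₁ hx) (integrableOn_rlPoly hδ p₂ hx)).trans
      (h₁.add h₂)
  | monomial m z =>
    rw [monomial_mul_monomial, one_mul, rlPoly_monomial, rlPoly_monomial, Pi.smul_apply,
      Pi.smul_apply, rlInt_const_smul, Nat.cast_add, add_mul]
    exact (rlInt_rlInt_ae_eq hn (by positivity) hx).const_smul z

lemma rlPoly_rlPoly_ae_eq (hδ : 0 ≤ δ) (p r : ℂ[X]) (hx : IntegrableOn x (Ioo a b)) :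
    rlPoly a δ p (rlPoly a δ r x) =ᵐ[volume.restrict (Ioo a b)] rlPoly a δ (p * r) x := by
  induction p using Polynomial.induction_on' with
  | add p₁ p₂ h₁ h₂ =>
    rw [add_mul, map_add, map_add]
    exact h₁.add h₂
  | monomial n z =>
    have hz : monomial n z = z • monomial n 1 := by rw [smul_monomial, smul_eq_mul, mul_one]
    rw [hz, smul_mul_assoc, map_smul, map_smul, rlPoly_monomial, one_smul]
    exact (rlInt_rlPoly_ae_eq hδ n r hx).const_smul z

end RlPoly

section Expand

variable {R : Type*} [CommRing R] {q : ℕ}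

lemma isIntegral_range_expand (hq : 0 < q) : Algebra.IsIntegral (expand R q).range R[X] := by
  have hX : IsIntegral (expand R q).range (X : R[X]) :=
    .of_pow hq (isIntegral_algebraMap (x := (⟨X ^ q, X, expand_X q⟩ : (expand R q).range)))
  refine ⟨fun p => ?_⟩
  rw [p.as_sum_range_C_mul_X_pow]
  exact IsIntegral.sum _ fun n _ =>
    (isIntegral_algebraMap (x := algebraMap R (expand R q).range (p.coeff n))).mul (hX.pow n)

lemma exists_ne_zero_dvd_expand [IsDomain R] (hq : 0 < q) {p : R[X]} (hp : p ≠ 0) :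
    ∃ r : R[X], r ≠ 0 ∧ p ∣ expand R q r := by
  obtain ⟨⟨_, r, rfl⟩, hr, hdvd⟩ :=
    ((isIntegral_range_expand hq).isIntegral p).isAlgebraic.exists_nonzero_dvd
      (mem_nonZeroDivisors_of_ne_zero hp)
  refine ⟨r, ?_, hdvd⟩
  rintro rfl
  exact hr (Subtype.ext (map_zero _))

end Expand

theorem fractional_operator_composition_natural_orders_general
    {ι : Type*} [Fintype ι] (a b : ℝ) {δ : ℝ} (hδ : 0 ≤ δ) {q : ℕ} (hq : 0 < q)
    {aexp : ι → ℕ} (hinj : Function.Injective aexp) {c : ι → ℂ} (hc : c ≠ 0) :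
    ∃ (m : ℕ) (d : Fin m → ℂ) (bexp : Fin m → ℕ) (n : ℕ) (e : Fin (n + 1) → ℂ),
      e (Fin.last n) ≠ 0 ∧
      ∀ x : ℝ → ℂ, IntegrableOn x (Ioo a b) →
        ∀ᵐ t ∂(volume.restrict (Ioo a b)),
          ∑ k, d k * rlInt a (bexp k * δ) (fun s => ∑ i, c i * rlInt a (aexp i * δ) x s) t
            = ∑ j : Fin (n + 1), e j * rlInt a ((j : ℕ) * (q * δ)) x t := by
  let P : ℂ[X] := ∑ i, monomial (aexp i) (c i)
  have hP : P ≠ 0 := fun h => hc <| funext fun i => by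
    classical simpa [P, coeff_monomial, hinj.eq_iff] using congrArg (coeff · (aexp i)) h
  obtain ⟨R, hR, Q, hQ⟩ := exists_ne_zero_dvd_expand hq hP
  refine ⟨Q.natDegree + 1, fun k => Q.coeff k, fun k => k, R.natDegree, fun j => R.coeff j,
    by simpa using hR, fun x hx => ?_⟩
  have hPx : rlPoly a δ P x = fun s => ∑ i, c i * rlInt a (aexp i * δ) x s := by
    ext s
    simp [P, rlPoly_monomial]
  filter_upwards [rlPoly_rlPoly_ae_eq hδ Q P hx] with t ht
  rw [← hPx, ← rlPoly_apply_eq_sum_fin, ← rlPoly_apply_eq_sum_fin, ht, mul_comm, ← hQ,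
    rlPoly_expand]

/-- Every linear fractional integral operator with constant coefficients
`Σ_i c_i · I_{a+}^{a_i/q}` (with pairwise distinct exponents `a_i ∈ ℕ`, `q > 0`, and nonzero
coefficient attached to the largest exponent) can be composed with another such operator
`Σ_k d_k · I_{a+}^{b_k/q}` so that the composition acts, a.e. on `(a,b)` and on every
function integrable on `(a,b)`, as a linear integral operator with constant coefficients and
natural-number orders `Σ_{j=0}^{n} e_j · I_{a+}^{j}`, whose top-order coefficient `e_n` is
nonzero. -/
theorem fractional_operator_composition_natural_orders
    (a b : ℝ) (hab : a < b) (q : ℕ) (hq : 0 < q)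
    (l : ℕ) (hl : 1 ≤ l) (aexp : Fin l → ℕ) (hinj : Function.Injective aexp)
    (c : Fin l → ℂ)
    (hc : ∀ i₀ : Fin l, (∀ i, aexp i ≤ aexp i₀) → c i₀ ≠ 0) :
    ∃ (m : ℕ) (d : Fin m → ℂ) (bexp : Fin m → ℕ) (n : ℕ) (e : Fin (n + 1) → ℂ),
      e (Fin.last n) ≠ 0 ∧
      ∀ x : ℝ → ℂ, IntegrableOn x (Set.Ioo a b) →
        ∀ᵐ t ∂(volume.restrict (Set.Ioo a b)),
          ∑ k, d k *
              rlInt a ((bexp k : ℝ) / (q : ℝ))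
                (fun s => ∑ i, c i * rlInt a ((aexp i : ℝ) / (q : ℝ)) x s) t
            = ∑ j : Fin (n + 1), e j * rlInt a ((j : ℕ) : ℝ) x t := by
  have : Nonempty (Fin l) := ⟨⟨0, hl⟩⟩
  obtain ⟨i₀, hi₀⟩ := Finite.exists_max aexp
  have hc₀ : c ≠ 0 := fun h => hc i₀ hi₀ (congrFun h i₀)
  have hqq : (q : ℝ) * (q : ℝ)⁻¹ = 1 := mul_inv_cancel₀ (by exact_mod_cast hq.ne')
  simpa only [div_eq_mul_inv, hqq, mul_one] using
    fractional_operator_composition_natural_orders_general a b (δ := (q : ℝ)⁻¹) (by positivity)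
      hq hinj hc₀
end
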